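/- The multiplication on the formal graph algebra is associative: for all graphs Γ₁, Γ₂, Γ₃, Γ' of genus g with n legs, Σ_Γ c'_{Γ₁,Γ₂,Γ} · c'_{Γ,Γ₃,Γ'} = Σ_Δ c'_{Γ₂,Γ₃,Δ} · c'_{Γ₁,Δ,Γ'}, where both sums run over a set of representatives of the isomorphism classes of graphs of genus g with n legs (only finitely many terms are nonzero). Both sides equal the number of ordered partitions E(Γ') = E₁ ⊔ E₂ ⊔ E₃ into three parts such that Γ'/(E₂ ∪ E₃) ≅ Γ₁, Γ'/(E₁ ∪ E₃) ≅ Γ₂, and Γ'/(E₁ ∪ E₂) ≅ Γ₃. -/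

import Mathlib

/-!
Graphs with legs (connected finite multigraphs given by half-edge data),
genus-labeled graphs, contractions, isomorphisms and the structure constants
of the formal graph algebra, following Pixton, "Generalized boundary strata classes".
-/

open scoped BigOperators

/-- A *graph with `n` legs*: a connected finite multigraph given by a finite set `H` of
half-edges, a vertex map `vtx : H → V`, and an involution `inv : H → H` whose fixed
points are exactly the `n` labeled legs. -/
structure LegGraph (n : ℕ) : Type 1 where
  /-- half-edges -/
  H : Type
  /-- vertices -/
  V : Type
  finH : Finite H
  finV : Finite V
  /-- the vertex at which a half-edge lies -/
  vtx : H → V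
  /-- the involution pairing the two halves of each edge -/
  inv : H → H
  inv_inv : ∀ h, inv (inv h) = h
  /-- the legs, an enumeration of the fixed points of `inv` -/
  leg : Fin n → H
  leg_fix : ∀ i, inv (leg i) = leg i
  leg_inj : Function.Injective leg
  leg_all : ∀ h, inv h = h → ∃ i, leg i = h
  nonemptyV : Nonempty V
  /-- connectivity -/
  conn : ∀ v w : V,
    Relation.ReflTransGen (fun a b => ∃ h, vtx h = a ∧ vtx (inv h) = b) v w

namespace LegGraph

variable {n : ℕ}

/-- The set of half-edges belonging to actual edges (non-fixed points of the involution). -/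
def edgeHalves (Γ : LegGraph n) : Set Γ.H := {h | Γ.inv h ≠ h}

/-- The number of edges `|E(Γ)|`: half the number of non-fixed half-edges. -/
noncomputable def edgeCount (Γ : LegGraph n) : ℕ := Nat.card Γ.edgeHalves / 2

/-- A subset `E' ⊆ E(Γ)` of the edges, encoded as the (involution-invariant) set of the
half-edges of those edges. -/
def IsEdgeSet (Γ : LegGraph n) (S : Set Γ.H) : Prop :=
  S ⊆ Γ.edgeHalves ∧ ∀ h ∈ S, Γ.inv h ∈ S

/-- The number of edges in an edge subset. -/
noncomputable def setCount (Γ : LegGraph n) (S : Set Γ.H) : ℕ := Nat.card S / 2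

/-- The valence `n_v` of a vertex: the number of half-edges at it. -/
noncomputable def valence (Γ : LegGraph n) (v : Γ.V) : ℕ := Nat.card {h : Γ.H // Γ.vtx h = v}

/-- The relation on vertices given by the edges in `S`. -/
def contrRel (Γ : LegGraph n) (S : Set Γ.H) : Γ.V → Γ.V → Prop :=
  fun a b => ∃ h ∈ S, Γ.vtx h = a ∧ Γ.vtx (Γ.inv h) = b

/-- The setoid identifying the two endpoints of every edge of `S`. -/
def contrSetoid (Γ : LegGraph n) (S : Set Γ.H) : Setoid Γ.V :=
  Relation.EqvGen.setoid (Γ.contrRel S)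

/-- The vertices of the contraction `Γ/S`. -/
def CVert (Γ : LegGraph n) (S : Set Γ.H) : Type := Quotient (Γ.contrSetoid S)

/-- The vertex of `Γ/S` into which a vertex of `Γ` is identified. -/
def cls (Γ : LegGraph n) (S : Set Γ.H) (v : Γ.V) : Γ.CVert S :=
  Quotient.mk (Γ.contrSetoid S) v

/-- The set of vertices of `Γ` identified into a given vertex of `Γ/S`. -/
def classSet (Γ : LegGraph n) (S : Set Γ.H) (c : Γ.CVert S) : Set Γ.V :=
  {v | Γ.cls S v = c}

/-- The number of contracted edges collapsed into a given vertex of `Γ/S`. -/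
noncomputable def classEdges (Γ : LegGraph n) (S : Set Γ.H) (c : Γ.CVert S) : ℕ :=
  Nat.card {h : Γ.H // h ∈ S ∧ Γ.cls S (Γ.vtx h) = c} / 2

/-- The number of edges of the contraction `Γ/S`. -/
noncomputable def cEdgeCount (Γ : LegGraph n) (S : Set Γ.H) : ℕ :=
  Nat.card {h : Γ.H // Γ.inv h ≠ h ∧ h ∉ S} / 2

/-- The valence of a vertex of the contraction `Γ/S`. -/
noncomputable def cValence (Γ : LegGraph n) (S : Set Γ.H) (c : Γ.CVert S) : ℕ :=
  Nat.card {h : Γ.H // h ∉ S ∧ Γ.cls S (Γ.vtx h) = c}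

end LegGraph

/-- A *graph of genus `g` with `n` legs*: a graph with `n` legs together with a genus
`gen v` at each vertex, satisfying `g = h₁(Γ) + Σ_v gen v` where
`h₁(Γ) = |E(Γ)| - |V(Γ)| + 1` (stated additively to avoid truncated subtraction). -/
structure GenusGraph (g n : ℕ) extends LegGraph n where
  /-- the genus of each vertex -/
  gen : V → ℕ
  gen_eq : g + Nat.card V = toLegGraph.edgeCount + 1 + ∑ᶠ v, gen v

namespace GenusGraph

variable {g n : ℕ}

/-- The genus of a vertex of the contraction `Γ/S`: the sum of the genera of the vertices
of `Γ` identified into it, plus the number of independent cycles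
(#edges - #vertices + 1) of the collapsed subgraph. -/
noncomputable def cGen (Γ : GenusGraph g n) (S : Set Γ.H) (c : Γ.toLegGraph.CVert S) : ℕ :=
  (∑ᶠ v ∈ Γ.toLegGraph.classSet S c, Γ.gen v) +
    (Γ.toLegGraph.classEdges S c + 1 - Nat.card (Γ.toLegGraph.classSet S c))

end GenusGraph

/-- An isomorphism of graphs with `n` legs: compatible bijections of half-edges and
vertices commuting with the vertex maps and involutions and preserving the leg labels. -/
structure LegGraph.Iso {n : ℕ} (Γ₁ Γ₂ : LegGraph n) where
  eH : Γ₁.H ≃ Γ₂.H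
  eV : Γ₁.V ≃ Γ₂.V
  vtx_comm : ∀ h, Γ₂.vtx (eH h) = eV (Γ₁.vtx h)
  inv_comm : ∀ h, Γ₂.inv (eH h) = eH (Γ₁.inv h)
  leg_comm : ∀ i, eH (Γ₁.leg i) = Γ₂.leg i

/-- An isomorphism of graphs of genus `g` with `n` legs: an isomorphism of the underlying
graphs with legs which also preserves the vertex genera. -/
structure GenusGraph.Iso {g n : ℕ} (Γ₁ Γ₂ : GenusGraph g n) extends
    LegGraph.Iso Γ₁.toLegGraph Γ₂.toLegGraph where
  gen_comm : ∀ v, Γ₂.gen (eV v) = Γ₁.gen v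

/-- An isomorphism from the contraction `Γ/S` (where `S` is the half-edge set of a set of
edges of `Γ`) to a graph `Γ'` with `n` legs. -/
structure LegGraph.CIso {n : ℕ} (Γ : LegGraph n) (S : Set Γ.H) (Γ' : LegGraph n) where
  eH : {h : Γ.H // h ∉ S} ≃ Γ'.H
  eV : Γ.CVert S ≃ Γ'.V
  vtx_comm : ∀ h, Γ'.vtx (eH h) = eV (Γ.cls S (Γ.vtx h.1))
  inv_comm : ∀ (h : {h : Γ.H // h ∉ S}) (hh : Γ.inv h.1 ∉ S),
    Γ'.inv (eH h) = eH ⟨Γ.inv h.1, hh⟩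
  leg_comm : ∀ (i : Fin n) (hi : Γ.leg i ∉ S), eH ⟨Γ.leg i, hi⟩ = Γ'.leg i

/-- An isomorphism of graphs of genus `g` with `n` legs from the contraction `Γ/S` to `Γ'`:
an isomorphism of the underlying contracted graph which carries the combined genera of
`Γ/S` to the genera of `Γ'`. -/
structure GenusGraph.CIso {g n : ℕ} (Γ : GenusGraph g n) (S : Set Γ.H)
    (Γ' : GenusGraph g n) extends
    LegGraph.CIso Γ.toLegGraph S Γ'.toLegGraph where
  gen_comm : ∀ c, Γ'.gen (eV c) = Γ.cGen S c

/-- The structure constant `c_{Γ₁,Γ₂,Γ}`: the number of quadruples `(E₁, E₂, φ₁, φ₂)` where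
`E(Γ) = E₁ ⊔ E₂` is an ordered partition of the edges (recorded by the half-edge set `S`
of `E₁`, with `E₂` the complementary set of edges) and `φᵢ : Γ/Eᵢ ≅ Γᵢ` are isomorphisms
of graphs of genus `g` with `n` legs. -/
noncomputable def GenusGraph.c {g n : ℕ} (Γ₁ Γ₂ Γ : GenusGraph g n) : ℕ :=
  Nat.card (Σ S : {S : Set Γ.H // Γ.toLegGraph.IsEdgeSet S},
    Γ.CIso S.1 Γ₁ × Γ.CIso (Γ.toLegGraph.edgeHalves \ S.1) Γ₂)

/-- The rescaled structure constant `c'_{Γ₁,Γ₂,Γ}`: the number of ordered partitions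
`E(Γ) = E₁ ⊔ E₂` of the edges such that `Γ/E₁ ≅ Γ₁` and `Γ/E₂ ≅ Γ₂`. -/
noncomputable def GenusGraph.c' {g n : ℕ} (Γ₁ Γ₂ Γ : GenusGraph g n) : ℕ :=
  Nat.card {S : Set Γ.H // Γ.toLegGraph.IsEdgeSet S ∧
    Nonempty (Γ.CIso S Γ₁) ∧ Nonempty (Γ.CIso (Γ.toLegGraph.edgeHalves \ S) Γ₂)}

/-- The order `|Aut(Γ)|` of the automorphism group of a graph of genus `g` with `n` legs. -/
noncomputable def GenusGraph.autCard {g n : ℕ} (Γ : GenusGraph g n) : ℕ :=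
  Nat.card (Γ.Iso Γ)


namespace LegGraph

variable {n : ℕ}

noncomputable instance (Γ : LegGraph n) : Fintype Γ.H := @Fintype.ofFinite _ Γ.finH
noncomputable instance (Γ : LegGraph n) : Fintype Γ.V := @Fintype.ofFinite _ Γ.finV
instance instFiniteCVert (Γ : LegGraph n) (S : Set Γ.H) : Finite (Γ.CVert S) :=
  inferInstanceAs (Finite (Quotient (Γ.contrSetoid S)))
noncomputable instance (Γ : LegGraph n) (S : Set Γ.H) : Fintype (Γ.CVert S) :=
  Fintype.ofFinite _

theorem cls_surj (Γ : LegGraph n) (S : Set Γ.H) (c : Γ.CVert S) : ∃ v, Γ.cls S v = c :=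
  Quotient.exists_rep c

theorem cls_rel (Γ : LegGraph n) {S : Set Γ.H} {h : Γ.H} (hh : h ∈ S) :
    Γ.cls S (Γ.vtx h) = Γ.cls S (Γ.vtx (Γ.inv h)) :=
  Quotient.sound (Relation.EqvGen.rel _ _ ⟨h, hh, rfl, rfl⟩)

theorem cls_eq_imp (Γ : LegGraph n) {S : Set Γ.H} {X : Type*} (f : Γ.V → X)
    (hf : ∀ h ∈ S, f (Γ.vtx h) = f (Γ.vtx (Γ.inv h))) {v w : Γ.V}
    (e : Γ.cls S v = Γ.cls S w) : f v = f w := by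
  have h : Relation.EqvGen (Γ.contrRel S) v w := Quotient.exact e
  induction h with
  | rel a b h => obtain ⟨h, hS, rfl, rfl⟩ := h; exact hf h hS
  | refl a => rfl
  | symm a b h ih => exact (ih (Quotient.sound h)).symm
  | trans a b c h1 h2 ih1 ih2 => exact (ih1 (Quotient.sound h1)).trans (ih2 (Quotient.sound h2))

theorem cls_mono (Γ : LegGraph n) {S T : Set Γ.H} (hST : S ⊆ T) {v w : Γ.V}
    (e : Γ.cls S v = Γ.cls S w) : Γ.cls T v = Γ.cls T w :=
  Γ.cls_eq_imp (Γ.cls T) (fun _ hh => Γ.cls_rel (hST hh)) e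

/-- half-edges in an invariant family without fixed points are even in number. -/
theorem even_halves (Γ : LegGraph n) (p : Γ.H → Prop) (h1 : ∀ h, p h → Γ.inv h ≠ h)
    (h2 : ∀ h, p h → p (Γ.inv h)) : 2 * (Nat.card {h // p h} / 2) = Nat.card {h // p h} := by
  classical
  apply Nat.mul_div_cancel'
  rw [Nat.card_eq_fintype_card, Fintype.card_subtype]
  rw [← ZMod.natCast_eq_zero_iff, Finset.cast_card]
  refine Finset.sum_involution (fun h _ => Γ.inv h) ?_ ?_ ?_ ?_
  · intros; decide
  · intro h hh _; exact h1 h (by simpa using hh)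
  · intro h hh; simpa using h2 h (by simpa using hh)
  · intro h _; exact Γ.inv_inv h

theorem even_classEdges (Γ : LegGraph n) {S : Set Γ.H} (hS : Γ.IsEdgeSet S) (c : Γ.CVert S) :
    2 * Γ.classEdges S c = Nat.card {h : Γ.H // h ∈ S ∧ Γ.cls S (Γ.vtx h) = c} := by
  apply even_halves
  · rintro h ⟨h1, -⟩; exact hS.1 h1
  · rintro h ⟨h1, h2⟩; exact ⟨hS.2 h h1, by rw [← h2, Γ.cls_rel h1]⟩

theorem card_classSet_le (Γ : LegGraph n) {S : Set Γ.H} (hS : Γ.IsEdgeSet S) (c : Γ.CVert S) :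
    Nat.card (Γ.classSet S c) ≤ Γ.classEdges S c + 1 := by
  classical
  let G : SimpleGraph (Γ.classSet S c) :=
    { Adj := fun a b => a ≠ b ∧ ∃ h ∈ S, Γ.vtx h = a.1 ∧ Γ.vtx (Γ.inv h) = b.1
      symm := ⟨by
        rintro a b ⟨h1, h, h2, h3, h4⟩
        exact ⟨h1.symm, Γ.inv h, hS.2 h h2, h4, by rw [Γ.inv_inv, h3]⟩⟩
      loopless := ⟨fun a h => h.1 rfl⟩ }
  obtain ⟨v0, hv0⟩ := Γ.cls_surj S c
  have hconn : G.Connected := by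
    refine (SimpleGraph.connected_iff _).2 ⟨?_, ⟨⟨v0, hv0⟩⟩⟩
    have key : ∀ v w, Relation.EqvGen (Γ.contrRel S) v w → ∀ (hv : Γ.cls S v = c)
        (hw : Γ.cls S w = c), G.Reachable ⟨v, hv⟩ ⟨w, hw⟩ := by
      intro v w h
      induction h with
      | rel a b h =>
        obtain ⟨h, h1, h2, h3⟩ := h
        intro hv hw
        by_cases hab : a = b
        · subst hab; exact SimpleGraph.Reachable.refl _
        · apply SimpleGraph.Adj.reachable
          exact ⟨fun h => hab (congrArg Subtype.val h), h, h1, h2, h3⟩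
      | refl a => intro _ _; exact SimpleGraph.Reachable.refl _
      | symm a b h ih => intro hv hw; exact (ih hw hv).symm
      | trans a b d h1 h2 ih1 ih2 =>
        intro hv hw
        have hb : Γ.cls S b = c := by rw [← hw]; exact Quotient.sound h2
        exact (ih1 hv hb).trans (ih2 hb hw)
    rintro ⟨v, hv⟩ ⟨w, hw⟩
    exact key v w (Quotient.exact (hv.trans hw.symm)) hv hw
  have h1 := hconn.card_vert_le_card_edgeSet_add_one
  have h2 := G.dart_card_eq_twice_card_edges
  have h3 := Γ.even_classEdges hS c
  have h4 : Fintype.card G.Dart ≤ Nat.card {h : Γ.H // h ∈ S ∧ Γ.cls S (Γ.vtx h) = c} := by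
    rw [← Nat.card_eq_fintype_card]
    have hd : ∀ d : G.Dart, ∃ h ∈ S, Γ.vtx h = d.fst.1 ∧ Γ.vtx (Γ.inv h) = d.snd.1 :=
      fun d => d.adj.2
    choose f hf1 hf2 hf3 using hd
    refine Nat.card_le_card_of_injective
      (fun d => (⟨f d, hf1 d, by rw [hf2]; exact d.fst.2⟩ :
        {h : Γ.H // h ∈ S ∧ Γ.cls S (Γ.vtx h) = c})) ?_
    intro d e hde
    have hde' : f d = f e := congrArg Subtype.val hde
    apply SimpleGraph.Dart.ext
    apply Prod.ext
    · apply Subtype.ext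
      exact (hf2 d).symm.trans ((congrArg Γ.vtx hde').trans (hf2 e))
    · apply Subtype.ext
      exact (hf3 d).symm.trans ((congrArg (fun x => Γ.vtx (Γ.inv x)) hde').trans (hf3 e))
  rw [Nat.card_eq_fintype_card (α := G.edgeSet), ← SimpleGraph.edgeFinset_card] at h1
  omega

end LegGraph

namespace GenusGraph

variable {g n : ℕ}

open scoped Classical in
theorem cGen_eq (Γ : GenusGraph g n) {S : Set Γ.H} (hS : Γ.toLegGraph.IsEdgeSet S)
    (c : Γ.toLegGraph.CVert S) :
    2 * Γ.cGen S c + ∑ v, (if Γ.cls S v = c then 2 else 0) =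
      ∑ v, (if Γ.cls S v = c then 2 * Γ.gen v else 0) +
      ∑ h, (if Γ.cls S (Γ.vtx h) = c then (if h ∈ S then 1 else 0) else 0) + 2 := by
  have h1 := Γ.toLegGraph.card_classSet_le hS c
  have h2 := Γ.toLegGraph.even_classEdges hS c
  have h3 : 2 * Nat.card (Γ.classSet S c) = ∑ v, (if Γ.cls S v = c then 2 else 0) := by
    have h0 : Nat.card (Γ.classSet S c) = Nat.card {v // Γ.cls S v = c} := rfl
    rw [h0, Nat.card_eq_fintype_card, Fintype.card_subtype, Finset.card_filter, Finset.mul_sum]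
    simp
  have h4 : 2 * (∑ᶠ v ∈ Γ.classSet S c, Γ.gen v) =
      ∑ v, (if Γ.cls S v = c then 2 * Γ.gen v else 0) := by
    rw [finsum_mem_def, finsum_eq_sum_of_fintype, Finset.mul_sum]
    refine Finset.sum_congr rfl fun v _ => ?_
    simp [Set.indicator_apply, LegGraph.classSet]
  have h5 : Nat.card {h : Γ.H // h ∈ S ∧ Γ.cls S (Γ.vtx h) = c} =
      ∑ h, (if Γ.cls S (Γ.vtx h) = c then (if h ∈ S then 1 else 0) else 0) := by
    rw [Nat.card_eq_fintype_card, Fintype.card_subtype, Finset.card_filter]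
    refine Finset.sum_congr rfl fun h _ => ?_
    by_cases a : h ∈ S <;> simp [a]
  rw [← h3, ← h4, ← h5]
  unfold cGen
  omega

end GenusGraph

open scoped Classical in
theorem fiber_sum_aux {V W : Type*} [Fintype V] [Fintype W] (q : V → W) (P : W → Prop)
    (f : V → ℕ) :
    ∑ w, (if P w then ∑ v, (if q v = w then f v else 0) else 0) =
      ∑ v, (if P (q v) then f v else 0) := by
  have h1 : ∀ w, (if P w then ∑ v, (if q v = w then f v else 0) else 0) =
      ∑ v, (if q v = w then (if P w then f v else 0) else 0) := by
    intro w
    by_cases h : P w <;> simp [h]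
  simp_rw [h1]
  rw [Finset.sum_comm]
  simp

namespace LegGraph

variable {n : ℕ}

/-- The contraction as a graph with legs. -/
def contractL (Γ : LegGraph n) (S : Set Γ.H) (hS : Γ.IsEdgeSet S) : LegGraph n where
  H := {h : Γ.H // h ∉ S}
  V := Γ.CVert S
  finH := by have := Γ.finH; infer_instance
  finV := inferInstance
  vtx h := Γ.cls S (Γ.vtx h.1)
  inv h := ⟨Γ.inv h.1, fun hh => h.2 (by simpa [Γ.inv_inv] using hS.2 _ hh)⟩
  inv_inv h := Subtype.ext (Γ.inv_inv h.1)
  leg i := ⟨Γ.leg i, fun hh => hS.1 hh (Γ.leg_fix i)⟩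
  leg_fix i := Subtype.ext (Γ.leg_fix i)
  leg_inj i j h := Γ.leg_inj (congrArg Subtype.val h)
  leg_all h hh := by
    obtain ⟨i, hi⟩ := Γ.leg_all h.1 (congrArg Subtype.val hh)
    exact ⟨i, Subtype.ext hi⟩
  nonemptyV := Γ.nonemptyV.map (Γ.cls S)
  conn v w := by
    obtain ⟨v, rfl⟩ := Γ.cls_surj S v
    obtain ⟨w, rfl⟩ := Γ.cls_surj S w
    have h := Γ.conn v w
    induction h with
    | refl => exact Relation.ReflTransGen.refl
    | tail _ h ih =>
      obtain ⟨h, rfl, rfl⟩ := h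
      by_cases hh : h ∈ S
      · rw [← Γ.cls_rel hh]; exact ih
      · exact ih.tail ⟨⟨h, hh⟩, rfl, rfl⟩

theorem two_edgeCount (Γ : LegGraph n) : 2 * Γ.edgeCount = Nat.card {h // Γ.inv h ≠ h} := by
  apply Γ.even_halves (fun h => Γ.inv h ≠ h)
  · exact fun _ h => h
  · intro h hh e; rw [Γ.inv_inv] at e; exact hh e.symm

theorem edgeCount_contractL (Γ : LegGraph n) (S : Set Γ.H) (hS : Γ.IsEdgeSet S) :
    2 * Γ.edgeCount = 2 * (Γ.contractL S hS).edgeCount + Nat.card S := by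
  classical
  rw [two_edgeCount, two_edgeCount]
  have h1 : Nat.card {h // (Γ.contractL S hS).inv h ≠ h} =
      Nat.card {h : Γ.H // h ∉ S ∧ Γ.inv h ≠ h} := by
    refine Nat.card_congr
      { toFun := fun x => ⟨x.1.1, x.1.2, fun e => x.2 (Subtype.ext e)⟩
        invFun := fun x => ⟨⟨x.1, x.2.1⟩, fun e => x.2.2 (congrArg Subtype.val e)⟩
        left_inv := fun _ => rfl
        right_inv := fun _ => rfl }
  have h2 : Nat.card S = Nat.card {h // h ∈ S} := rfl
  rw [h1, h2]
  simp only [Nat.card_eq_fintype_card, Fintype.card_subtype, Finset.card_filter]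
  rw [← Finset.sum_add_distrib]
  refine Finset.sum_congr rfl fun h _ => ?_
  by_cases a : h ∈ S
  · have := hS.1 a
    simp only [edgeHalves, Set.mem_ofPred_eq] at this
    simp [a, this]
  · simp [a]

end LegGraph

namespace GenusGraph

variable {g n : ℕ}

theorem contract_gen_eq (Γ : GenusGraph g n) (S : Set Γ.H) (hS : Γ.toLegGraph.IsEdgeSet S) :
    g + Nat.card (Γ.CVert S) = (Γ.toLegGraph.contractL S hS).edgeCount + 1 +
      ∑ᶠ c, Γ.cGen S c := by
  classical
  have h1 := Γ.toLegGraph.edgeCount_contractL S hS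
  have h2 := Γ.gen_eq
  have h3 := Finset.sum_congr (s₁ := Finset.univ) rfl (fun c _ => Γ.cGen_eq hS c)
  have h4 := fun f : Γ.V → ℕ => fiber_sum_aux (Γ.cls S) (fun _ => True) f
  have h5 := fun f : Γ.H → ℕ => fiber_sum_aux (fun h => Γ.cls S (Γ.vtx h)) (fun _ => True) f
  simp only [if_true] at h4 h5
  simp only [Finset.sum_add_distrib] at h3
  rw [h4, h4, h5] at h3
  rw [finsum_eq_sum_of_fintype] at h2 ⊢
  have h6 : Nat.card S = ∑ h, (if h ∈ S then 1 else 0) := by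
    have h2 : Nat.card S = Nat.card {h // h ∈ S} := rfl
    rw [h2, Nat.card_eq_fintype_card, Fintype.card_subtype, Finset.card_filter]
  simp only [← Finset.mul_sum, Finset.sum_const, Finset.card_univ, smul_eq_mul] at h3
  rw [← h6] at h3
  rw [Nat.card_eq_fintype_card] at h2 ⊢
  omega

/-- The contraction as a graph of genus `g`. -/
noncomputable def contract (Γ : GenusGraph g n) (S : Set Γ.H)
    (hS : Γ.toLegGraph.IsEdgeSet S) : GenusGraph g n where
  toLegGraph := Γ.toLegGraph.contractL S hS
  gen := Γ.cGen S
  gen_eq := Γ.contract_gen_eq S hS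

theorem contract_ciso (Γ : GenusGraph g n) (S : Set Γ.H)
    (hS : Γ.toLegGraph.IsEdgeSet S) : Nonempty (Γ.CIso S (Γ.contract S hS)) :=
  ⟨{ eH := Equiv.refl _
     eV := Equiv.refl _
     vtx_comm := fun _ => rfl
     inv_comm := fun _ _ => rfl
     leg_comm := fun _ _ => rfl
     gen_comm := fun _ => rfl }⟩

theorem CIso.trans_iso {Γ Δ Δ' : GenusGraph g n} {S : Set Γ.H} (φ : Γ.CIso S Δ)
    (e : Δ.Iso Δ') : Nonempty (Γ.CIso S Δ') :=
  ⟨{ eH := φ.eH.trans e.eH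
     eV := φ.eV.trans e.eV
     vtx_comm := fun h => by simp [e.vtx_comm, φ.vtx_comm]
     inv_comm := fun h hh => by simp [e.inv_comm, φ.inv_comm h hh]
     leg_comm := fun i hi => by simp [φ.leg_comm i hi, e.leg_comm]
     gen_comm := fun c => by simp [e.gen_comm, φ.gen_comm] }⟩

theorem CIso.iso {Γ Δ Δ' : GenusGraph g n} {S : Set Γ.H} (hS : Γ.toLegGraph.IsEdgeSet S)
    (φ : Γ.CIso S Δ) (ψ : Γ.CIso S Δ') : Nonempty (Δ.Iso Δ') :=
  ⟨{ eH := φ.eH.symm.trans ψ.eH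
     eV := φ.eV.symm.trans ψ.eV
     vtx_comm := fun h => by
      obtain ⟨h, rfl⟩ := φ.eH.surjective h
      simp [ψ.vtx_comm, φ.vtx_comm]
     inv_comm := fun h => by
      obtain ⟨h, rfl⟩ := φ.eH.surjective h
      have hh : Γ.inv h.1 ∉ S := fun hh => h.2 (by simpa [Γ.inv_inv] using hS.2 _ hh)
      simp [ψ.inv_comm h hh, φ.inv_comm h hh]
     leg_comm := fun i => by
      have hi : Γ.leg i ∉ S := fun hh => hS.1 hh (Γ.leg_fix i)
      simp [← φ.leg_comm i hi, ψ.leg_comm i hi]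
     gen_comm := fun v => by
      obtain ⟨v, rfl⟩ := φ.eV.surjective v
      simp [ψ.gen_comm, φ.gen_comm] }⟩

theorem Iso.symm' {Δ Δ' : GenusGraph g n} (e : Δ.Iso Δ') : Nonempty (Δ'.Iso Δ) :=
  ⟨{ eH := e.eH.symm
     eV := e.eV.symm
     vtx_comm := fun h => by
      obtain ⟨h, rfl⟩ := e.eH.surjective h
      simp [e.vtx_comm]
     inv_comm := fun h => by
      obtain ⟨h, rfl⟩ := e.eH.surjective h
      simp [e.inv_comm]
     leg_comm := fun i => by simp [← e.leg_comm]
     gen_comm := fun v => by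
      obtain ⟨v, rfl⟩ := e.eV.surjective v
      simp [e.gen_comm] }⟩

/-- The half-edge set of `Γ` corresponding to a half-edge set of `Γ/T ≅ Δ`. -/
def CIso.pull {Γ Δ : GenusGraph g n} {T : Set Γ.H} (φ : Γ.CIso T Δ) (S : Set Δ.H) : Set Γ.H :=
  {h | ∃ hh : h ∉ T, φ.eH ⟨h, hh⟩ ∈ S}

section pull

variable {Γ Δ : GenusGraph g n} {T : Set Γ.H}

theorem CIso.mem_pull (φ : Γ.CIso T Δ) (S : Set Δ.H) (h : {h // h ∉ T}) :
    h.1 ∈ φ.pull S ↔ φ.eH h ∈ S := ⟨fun ⟨_, h2⟩ => h2, fun h2 => ⟨h.2, h2⟩⟩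

theorem CIso.not_mem_of_pull (φ : Γ.CIso T Δ) {S : Set Δ.H} {h : Γ.H} (hh : h ∈ φ.pull S) :
    h ∉ T := hh.1

theorem inv_not_mem (hT : Γ.toLegGraph.IsEdgeSet T) {h : Γ.H} (hh : h ∉ T) : Γ.inv h ∉ T :=
  fun h2 => hh (by simpa [Γ.inv_inv] using hT.2 _ h2)

theorem CIso.inv_eq (φ : Γ.CIso T Δ) (hT : Γ.toLegGraph.IsEdgeSet T) (h : {h // h ∉ T}) :
    Δ.inv (φ.eH h) = φ.eH ⟨Γ.inv h.1, inv_not_mem hT h.2⟩ := φ.inv_comm h _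

theorem CIso.mem_edgeHalves (φ : Γ.CIso T Δ) (hT : Γ.toLegGraph.IsEdgeSet T)
    (h : {h // h ∉ T}) : φ.eH h ∈ Δ.edgeHalves ↔ h.1 ∈ Γ.edgeHalves := by
  simp [LegGraph.edgeHalves, φ.inv_eq hT, Subtype.ext_iff]

theorem CIso.pull_isEdgeSet (φ : Γ.CIso T Δ) (hT : Γ.toLegGraph.IsEdgeSet T) {S : Set Δ.H}
    (hS : Δ.toLegGraph.IsEdgeSet S) : Γ.toLegGraph.IsEdgeSet (φ.pull S) := by
  constructor
  · rintro h ⟨hh, h2⟩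
    exact (φ.mem_edgeHalves hT ⟨h, hh⟩).1 (hS.1 h2)
  · rintro h ⟨hh, h2⟩
    refine ⟨inv_not_mem hT hh, ?_⟩
    have := hS.2 _ h2
    rwa [φ.inv_eq hT] at this

theorem CIso.pull_compl (φ : Γ.CIso T Δ) (hT : Γ.toLegGraph.IsEdgeSet T) (S : Set Δ.H) :
    φ.pull (Δ.edgeHalves \ S) = Γ.edgeHalves \ (T ∪ φ.pull S) := by
  ext h
  by_cases hh : h ∈ T
  · simp [hh, CIso.pull]
  · have h1 := φ.mem_edgeHalves hT ⟨h, hh⟩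
    have h2 := φ.mem_pull S ⟨h, hh⟩
    have h3 := φ.mem_pull (Δ.edgeHalves \ S) ⟨h, hh⟩
    simp only [Set.mem_sdiff, Set.mem_union] at *
    tauto

theorem CIso.pull_injective (φ : Γ.CIso T Δ) : Function.Injective φ.pull := by
  intro S S' h
  ext x
  obtain ⟨x, rfl⟩ := φ.eH.surjective x
  rw [← φ.mem_pull, ← φ.mem_pull, h]

theorem CIso.pull_surj (φ : Γ.CIso T Δ) (hT : Γ.toLegGraph.IsEdgeSet T) {U : Set Γ.H}
    (hU : Γ.toLegGraph.IsEdgeSet U) (hd : Disjoint T U) :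
    ∃ S, Δ.toLegGraph.IsEdgeSet S ∧ φ.pull S = U := by
  refine ⟨{x | (φ.eH.symm x).1 ∈ U}, ⟨?_, ?_⟩, ?_⟩
  · intro x hx
    obtain ⟨x, rfl⟩ := φ.eH.surjective x
    rw [φ.mem_edgeHalves hT]
    exact hU.1 (by simpa using hx)
  · intro x hx
    obtain ⟨x, rfl⟩ := φ.eH.surjective x
    rw [φ.inv_eq hT]
    simpa using hU.2 _ (by simpa using hx)
  · ext h
    constructor
    · rintro ⟨hh, h2⟩
      simpa using h2
    · intro h2
      exact ⟨fun h3 => Set.disjoint_left.1 hd h3 h2, by simpa using h2⟩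

variable {S : Set Δ.H}

/-- the vertex map. -/
def CIso.q (φ : Γ.CIso T Δ) (v : Γ.V) : Δ.V := φ.eV (Γ.cls T v)

theorem CIso.q_surj (φ : Γ.CIso T Δ) : Function.Surjective φ.q := by
  intro w
  obtain ⟨c, rfl⟩ := φ.eV.surjective w
  obtain ⟨v, rfl⟩ := Γ.toLegGraph.cls_surj T c
  exact ⟨v, rfl⟩

theorem CIso.cls_iff (φ : Γ.CIso T Δ) (hT : Γ.toLegGraph.IsEdgeSet T) (v w : Γ.V) :
    Γ.cls (T ∪ φ.pull S) v = Γ.cls (T ∪ φ.pull S) w ↔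
      Δ.cls S (φ.q v) = Δ.cls S (φ.q w) := by
  constructor
  · refine Γ.toLegGraph.cls_eq_imp (fun v => Δ.cls S (φ.q v)) ?_
    rintro h (hh | ⟨hh, h2⟩)
    · simp only [CIso.q]
      rw [Γ.toLegGraph.cls_rel hh]
    · have := Δ.toLegGraph.cls_rel h2
      rwa [φ.inv_eq hT, φ.vtx_comm, φ.vtx_comm] at this
  · intro e
    choose s hs using φ.q_surj
    have hq : ∀ v, Γ.cls (T ∪ φ.pull S) (s (φ.q v)) = Γ.cls (T ∪ φ.pull S) v := by
      intro v
      exact Γ.toLegGraph.cls_mono Set.subset_union_left (φ.eV.injective (hs (φ.q v)))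
    have := Δ.toLegGraph.cls_eq_imp (fun w => Γ.cls (T ∪ φ.pull S) (s w)) ?_ e
    · simpa [hq] using this
    · intro h hh
      obtain ⟨h, rfl⟩ := φ.eH.surjective h
      rw [φ.inv_eq hT, φ.vtx_comm, φ.vtx_comm]
      refine (hq _).trans (Eq.trans ?_ (hq _).symm)
      exact Γ.toLegGraph.cls_rel (Or.inr ⟨h.2, hh⟩)

theorem CIso.exists_eV (φ : Γ.CIso T Δ) (hT : Γ.toLegGraph.IsEdgeSet T) (S : Set Δ.H) :
    ∃ e : Γ.CVert (T ∪ φ.pull S) ≃ Δ.CVert S,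
      ∀ v, e (Γ.cls (T ∪ φ.pull S) v) = Δ.cls S (φ.q v) := by
  let f : Γ.CVert (T ∪ φ.pull S) → Δ.CVert S :=
    Quotient.lift (fun v => Δ.cls S (φ.q v))
      (fun v w h => (φ.cls_iff hT v w).1 (Quotient.sound h))
  have hf : ∀ v, f (Γ.cls (T ∪ φ.pull S) v) = Δ.cls S (φ.q v) := fun _ => rfl
  refine ⟨Equiv.ofBijective f ⟨?_, ?_⟩, hf⟩
  · intro a b h
    obtain ⟨a, rfl⟩ := Γ.toLegGraph.cls_surj _ a
    obtain ⟨b, rfl⟩ := Γ.toLegGraph.cls_surj _ b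
    rw [hf, hf] at h
    exact (φ.cls_iff hT a b).2 h
  · intro d
    obtain ⟨w, rfl⟩ := Δ.toLegGraph.cls_surj _ d
    obtain ⟨v, rfl⟩ := φ.q_surj w
    exact ⟨_, hf v⟩

theorem CIso.exists_eH (φ : Γ.CIso T Δ) (S : Set Δ.H) :
    ∃ e : {h // h ∉ T ∪ φ.pull S} ≃ {h // h ∉ S},
      ∀ h, (e h).1 = φ.eH ⟨h.1, fun hh => h.2 (Or.inl hh)⟩ := by
  refine ⟨⟨fun h => ⟨φ.eH ⟨h.1, fun hh => h.2 (Or.inl hh)⟩, fun hh => h.2 (Or.inr ⟨_, hh⟩)⟩,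
    fun h => ⟨(φ.eH.symm h.1).1, ?_⟩, ?_, ?_⟩, fun _ => rfl⟩
  · rintro (hh | hh)
    · exact (φ.eH.symm h.1).2 hh
    · rw [φ.mem_pull] at hh
      exact h.2 (by simpa using hh)
  · intro h; simp
  · intro h; simp

theorem CIso.isEdgeSet_union (φ : Γ.CIso T Δ) (hT : Γ.toLegGraph.IsEdgeSet T)
    (hS : Δ.toLegGraph.IsEdgeSet S) : Γ.toLegGraph.IsEdgeSet (T ∪ φ.pull S) := by
  have h := φ.pull_isEdgeSet hT hS
  exact ⟨Set.union_subset hT.1 h.1, fun x hx => hx.imp (hT.2 x) (h.2 x)⟩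

theorem CIso.cGen_comp (φ : Γ.CIso T Δ) (hT : Γ.toLegGraph.IsEdgeSet T)
    (hS : Δ.toLegGraph.IsEdgeSet S) (e : Γ.CVert (T ∪ φ.pull S) ≃ Δ.CVert S)
    (he : ∀ v, e (Γ.cls (T ∪ φ.pull S) v) = Δ.cls S (φ.q v))
    (c : Γ.CVert (T ∪ φ.pull S)) : Δ.cGen S (e c) = Γ.cGen (T ∪ φ.pull S) c := by
  classical
  have h2 := Δ.cGen_eq hS (e c)
  have hi : ∀ v, Γ.cls (T ∪ φ.pull S) v = c ↔ Δ.cls S (φ.q v) = e c := by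
    intro v; rw [← he, e.apply_eq_iff_eq]
  have h1 : 2 * Γ.cGen (T ∪ φ.pull S) c + ∑ v, (if Δ.cls S (φ.q v) = e c then 2 else 0) =
      ∑ v, (if Δ.cls S (φ.q v) = e c then 2 * Γ.gen v else 0) +
      ∑ h : Γ.H, (if Δ.cls S (φ.q (Γ.vtx h)) = e c then
        (if h ∈ T ∪ φ.pull S then 1 else 0) else 0) + 2 := by
    have := Γ.cGen_eq (φ.isEdgeSet_union hT hS) c
    simp only [hi] at this
    convert this
  have h3 : ∀ w, 2 * Δ.gen w + ∑ v, (if φ.q v = w then 2 else 0) =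
      ∑ v, (if φ.q v = w then 2 * Γ.gen v else 0) +
      ∑ h, (if φ.q (Γ.vtx h) = w then (if h ∈ T then 1 else 0) else 0) + 2 := by
    intro w
    obtain ⟨a, rfl⟩ := φ.eV.surjective w
    rw [φ.gen_comm]
    have := Γ.cGen_eq hT a
    simpa only [CIso.q, φ.eV.apply_eq_iff_eq] using this
  have h4 : ∑ w, (if Δ.cls S w = e c then
        2 * Δ.gen w + ∑ v, (if φ.q v = w then 2 else 0) else 0) =
      ∑ w, (if Δ.cls S w = e c then
      ∑ v, (if φ.q v = w then 2 * Γ.gen v else 0) +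
      ∑ h, (if φ.q (Γ.vtx h) = w then (if h ∈ T then 1 else 0) else 0) + 2 else 0) := by
    simp only [h3]
  have ia : ∀ (p : Prop) [Decidable p] (a b : ℕ), (if p then a + b else 0) =
      (if p then a else 0) + (if p then b else 0) := by
    intro p _ a b; split_ifs <;> rfl
  simp only [ia, Finset.sum_add_distrib] at h4
  have f1 := fun f : Γ.V → ℕ => fiber_sum_aux φ.q (fun w => Δ.cls S w = e c) f
  have f2 := fun f : Γ.H → ℕ =>
    fiber_sum_aux (fun h => φ.q (Γ.vtx h)) (fun w => Δ.cls S w = e c) f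
  rw [f1, f1, f2] at h4
  have h5 : ∑ h : Γ.H, (if Δ.cls S (φ.q (Γ.vtx h)) = e c then
        (if h ∈ T ∪ φ.pull S then 1 else 0) else 0) =
      ∑ h : Γ.H, (if Δ.cls S (φ.q (Γ.vtx h)) = e c then (if h ∈ T then 1 else 0) else 0) +
      ∑ h : Γ.H, (if Δ.cls S (φ.q (Γ.vtx h)) = e c then
        (if h ∈ φ.pull S then 1 else 0) else 0) := by
    rw [← Finset.sum_add_distrib]
    refine Finset.sum_congr rfl fun h _ => ?_
    rw [← ia]
    congr 1
    by_cases a : h ∈ T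
    · have : h ∉ φ.pull S := fun hh => hh.1 a
      simp [a, this]
    · simp [a]
  have h6 : ∑ h : Γ.H, (if Δ.cls S (φ.q (Γ.vtx h)) = e c then
        (if h ∈ φ.pull S then 1 else 0) else 0) =
      ∑ h : Δ.H, (if Δ.cls S (Δ.vtx h) = e c then (if h ∈ S then 1 else 0) else 0) := by
    have h7 : ∀ x : {h // h ∉ T}, (if Δ.cls S (φ.q (Γ.vtx x.1)) = e c then
        (if x.1 ∈ φ.pull S then 1 else 0) else 0) =
        (if Δ.cls S (Δ.vtx (φ.eH x)) = e c then (if φ.eH x ∈ S then 1 else 0) else 0) := by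
      intro x
      rw [φ.vtx_comm]
      simp only [φ.mem_pull]
      rfl
    rw [← Equiv.sum_comp φ.eH, ← Finset.sum_congr rfl (fun x _ => h7 x)]
    rw [← Finset.sum_subtype (p := fun h => h ∉ T) (Finset.univ.filter (fun h => h ∉ T))
      (by simp) (fun h : Γ.H => if Δ.cls S (φ.q (Γ.vtx h)) = e c then
        (if h ∈ φ.pull S then 1 else 0) else 0), Finset.sum_filter]
    refine Finset.sum_congr rfl fun h _ => ?_
    by_cases a : h ∈ T
    · have : h ∉ φ.pull S := fun hh => hh.1 a
      simp [a, this]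
    · simp [a]
  omega

theorem CIso.comp_iff (φ : Γ.CIso T Δ) (hT : Γ.toLegGraph.IsEdgeSet T)
    (hS : Δ.toLegGraph.IsEdgeSet S) (Ξ : GenusGraph g n) :
    Nonempty (Δ.CIso S Ξ) ↔ Nonempty (Γ.CIso (T ∪ φ.pull S) Ξ) := by
  obtain ⟨e, he⟩ := φ.exists_eV hT S
  obtain ⟨f, hf⟩ := φ.exists_eH S
  have hU := φ.isEdgeSet_union hT hS
  have hg := φ.cGen_comp hT hS e he
  have hv : ∀ h, Δ.cls S (Δ.vtx (f h).1) = e (Γ.cls (T ∪ φ.pull S) (Γ.vtx h.1)) := by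
    intro h; rw [hf, φ.vtx_comm, he]; rfl
  have hinv : ∀ h, f ⟨Γ.inv h.1, inv_not_mem hU h.2⟩ =
      ⟨Δ.inv (f h).1, inv_not_mem hS (f h).2⟩ := by
    intro h; apply Subtype.ext; simp only [hf, φ.inv_eq hT]
  have hl : ∀ i (h1 : Γ.leg i ∉ T ∪ φ.pull S) , (f ⟨Γ.leg i, h1⟩).1 = Δ.leg i := by
    intro i h1; rw [hf]; exact φ.leg_comm i _
  constructor
  · rintro ⟨ψ⟩
    exact ⟨{
      eH := f.trans ψ.eH
      eV := e.trans ψ.eV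
      vtx_comm := fun h => by simp [ψ.vtx_comm, hv]
      inv_comm := fun h hh => by
        have := ψ.inv_eq hS (f h)
        simp only [Equiv.trans_apply]
        rw [this, ← hinv]
      leg_comm := fun i hi => by
        simp only [Equiv.trans_apply]
        have h2 : Δ.leg i ∉ S := by rw [← hl i hi]; exact (f _).2
        rw [← ψ.leg_comm i h2]
        exact congrArg _ (Subtype.ext (hl i hi))
      gen_comm := fun c => by simp [ψ.gen_comm, hg] }⟩
  · rintro ⟨ψ⟩
    exact ⟨{
      eH := f.symm.trans ψ.eH
      eV := e.symm.trans ψ.eV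
      vtx_comm := fun h => by
        obtain ⟨h, rfl⟩ := f.surjective h
        simp [ψ.vtx_comm, hv]
      inv_comm := fun h hh => by
        obtain ⟨h, rfl⟩ := f.surjective h
        have := ψ.inv_eq hU h
        simp only [Equiv.trans_apply, Equiv.symm_apply_apply]
        rw [this, ← hinv, Equiv.symm_apply_apply]
      leg_comm := fun i hi => by
        simp only [Equiv.trans_apply]
        have h2 : Γ.leg i ∉ T ∪ φ.pull S := fun hh => hU.1 hh (Γ.leg_fix i)
        rw [← ψ.leg_comm i h2]
        refine congrArg _ ?_
        rw [Equiv.symm_apply_eq]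
        exact (Subtype.ext (hl i h2)).symm
      gen_comm := fun c => by
        obtain ⟨c, rfl⟩ := e.surjective c
        simp [ψ.gen_comm, hg] }⟩

end pull

theorem isEdgeSet_compl {Γ : GenusGraph g n} {S : Set Γ.H} (hS : Γ.toLegGraph.IsEdgeSet S) :
    Γ.toLegGraph.IsEdgeSet (Γ.edgeHalves \ S) := by
  refine ⟨Set.sdiff_subset, ?_⟩
  rintro h ⟨h1, h2⟩
  refine ⟨fun e => ?_, inv_not_mem hS h2⟩
  rw [Γ.inv_inv] at e
  exact h1 e.symm

theorem isEdgeSet_union {Γ : GenusGraph g n} {S T : Set Γ.H} (hS : Γ.toLegGraph.IsEdgeSet S)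
    (hT : Γ.toLegGraph.IsEdgeSet T) : Γ.toLegGraph.IsEdgeSet (S ∪ T) :=
  ⟨Set.union_subset hS.1 hT.1, fun x hx => hx.imp (hS.2 x) (hT.2 x)⟩

theorem compl_compl' {Γ : GenusGraph g n} {S : Set Γ.H} (hS : Γ.toLegGraph.IsEdgeSet S) :
    Γ.edgeHalves \ (Γ.edgeHalves \ S) = S := Set.sdiff_sdiff_cancel_left hS.1

theorem c'_comm (Γ₁ Γ₂ Γ : GenusGraph g n) : c' Γ₁ Γ₂ Γ = c' Γ₂ Γ₁ Γ := by
  have key : ∀ (Γ₁ Γ₂ : GenusGraph g n) (S : {S : Set Γ.H // Γ.toLegGraph.IsEdgeSet S ∧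
      Nonempty (Γ.CIso S Γ₁) ∧ Nonempty (Γ.CIso (Γ.toLegGraph.edgeHalves \ S) Γ₂)}),
      Γ.toLegGraph.IsEdgeSet (Γ.edgeHalves \ S.1) ∧
      Nonempty (Γ.CIso (Γ.edgeHalves \ S.1) Γ₂) ∧
      Nonempty (Γ.CIso (Γ.toLegGraph.edgeHalves \ (Γ.edgeHalves \ S.1)) Γ₁) := by
    rintro Γ₁ Γ₂ ⟨S, h1, h2, h3⟩
    refine ⟨isEdgeSet_compl h1, h3, ?_⟩
    rw [compl_compl' h1]; exact h2
  exact Nat.card_congr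
    { toFun := fun S => ⟨Γ.edgeHalves \ S.1, key _ _ S⟩
      invFun := fun S => ⟨Γ.edgeHalves \ S.1, key _ _ S⟩
      left_inv := fun S => Subtype.ext (compl_compl' S.2.1)
      right_inv := fun S => Subtype.ext (compl_compl' S.2.1) }

/-- The set of ordered partitions into three parts. -/
def Trip (Γ₁ Γ₂ Γ₃ Γ' : GenusGraph g n) : Set (Set Γ'.H × Set Γ'.H) :=
  {p | Γ'.toLegGraph.IsEdgeSet p.1 ∧ Γ'.toLegGraph.IsEdgeSet p.2 ∧ Disjoint p.1 p.2 ∧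
        Nonempty (Γ'.CIso (Γ'.toLegGraph.edgeHalves \ p.1) Γ₁) ∧
        Nonempty (Γ'.CIso (Γ'.toLegGraph.edgeHalves \ p.2) Γ₂) ∧
        Nonempty (Γ'.CIso (p.1 ∪ p.2) Γ₃)}

theorem trip_rot (Γ₁ Γ₂ Γ₃ Γ' : GenusGraph g n) :
    (Trip Γ₁ Γ₂ Γ₃ Γ').ncard = (Trip Γ₂ Γ₃ Γ₁ Γ').ncard := by
  refine Set.ncard_congr (fun p _ => (p.2, Γ'.edgeHalves \ (p.1 ∪ p.2))) ?_ ?_ ?_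
  · rintro ⟨A, B⟩ ⟨h1, h2, h3, h4, h5, h6⟩
    have hAB := isEdgeSet_union h1 h2
    refine ⟨h2, isEdgeSet_compl hAB, ?_, h5, ?_, ?_⟩
    · exact Set.disjoint_left.2 fun x hx h => h.2 (Or.inr hx)
    · simp only [compl_compl' hAB]; exact h6
    · have : B ∪ Γ'.edgeHalves \ (A ∪ B) = Γ'.edgeHalves \ A := by
        ext x
        have a1 := @h2.1 x
        have a2 : x ∈ _ → x ∉ _ := fun hx => Set.disjoint_left.1 h3 hx
        simp only [Set.mem_union, Set.mem_sdiff]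
        tauto
      simp only [this]; exact h4
  · rintro ⟨A, B⟩ ⟨A', B'⟩ ⟨h1, h2, h3, -⟩ ⟨h1', h2', h3', -⟩ h
    simp only [Prod.mk.injEq] at h
    obtain ⟨rfl, h⟩ := h
    have h := congrArg (fun X => Γ'.edgeHalves \ X) h
    simp only [compl_compl' (isEdgeSet_union h1 h2), compl_compl' (isEdgeSet_union h1' h2)] at h
    have : A = A' := by
      ext x
      have a1 := Set.ext_iff.1 h x
      have a2 : x ∈ _ → x ∉ _ := fun hx => Set.disjoint_left.1 h3 hx
      have a3 : x ∈ _ → x ∉ _ := fun hx => Set.disjoint_left.1 h3' hx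
      simp only [Set.mem_union] at a1
      tauto
    rw [this]
  · rintro ⟨B, C⟩ ⟨h1, h2, h3, h4, h5, h6⟩
    have hBC := isEdgeSet_union h1 h2
    have e1 : (Γ'.edgeHalves \ (B ∪ C)) ∪ B = Γ'.edgeHalves \ C := by
      ext x
      have a1 := @h1.1 x
      have a2 : x ∈ _ → x ∉ _ := fun hx => Set.disjoint_left.1 h3 hx
      simp only [Set.mem_union, Set.mem_sdiff]
      tauto
    refine ⟨(Γ'.edgeHalves \ (B ∪ C), B), ⟨isEdgeSet_compl hBC, h1, ?_, ?_, h4, ?_⟩, ?_⟩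
    · exact Set.disjoint_left.2 fun x hx h => hx.2 (Or.inl h)
    · simp only [compl_compl' hBC]; exact h6
    · simp only [e1]; exact h5
    · simp only [e1, compl_compl' h2]

theorem core (Γ₁ Γ₂ Γ₃ Γ' Δ : GenusGraph g n) :
    c' Γ₁ Γ₂ Δ * c' Δ Γ₃ Γ' = {p ∈ Trip Γ₁ Γ₂ Γ₃ Γ' |
      Nonempty (Γ'.CIso (Γ'.edgeHalves \ (p.1 ∪ p.2)) Δ)}.ncard := by
  unfold c'
  rw [← Nat.card_prod, ← Nat.card_coe_set_eq]
  let φ := fun T : {S : Set Γ'.H // Γ'.toLegGraph.IsEdgeSet S ∧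
    Nonempty (Γ'.CIso S Δ) ∧ Nonempty (Γ'.CIso (Γ'.toLegGraph.edgeHalves \ S) Γ₃)} =>
      T.2.2.1.some
  have hU : ∀ (T : Set Γ'.H) (P : Set Γ'.H), Γ'.toLegGraph.IsEdgeSet T →
      Γ'.toLegGraph.IsEdgeSet P → (∀ h ∈ P, h ∉ T) →
      (Γ'.edgeHalves \ P = T ∪ (Γ'.edgeHalves \ (T ∪ P))) ∧
      ((Γ'.edgeHalves \ (T ∪ P)) ∪ P = Γ'.edgeHalves \ T) := by
    intro T P hT hP hd
    constructor
    · ext x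
      have a1 := @hT.1 x
      have a2 := hd x
      simp only [Set.mem_union, Set.mem_sdiff]
      tauto
    · ext x
      have a1 := @hP.1 x
      have a2 := hd x
      simp only [Set.mem_union, Set.mem_sdiff]
      tauto
  refine Nat.card_congr (Equiv.ofBijective (fun x =>
    ⟨(Γ'.edgeHalves \ (x.2.1 ∪ (φ x.2).pull x.1.1), (φ x.2).pull x.1.1), ?_⟩) ⟨?_, ?_⟩)
  · obtain ⟨⟨S, hS, s1, s2⟩, T⟩ := x
    have hT := T.2.1
    have hP := (φ T).pull_isEdgeSet hT hS
    have hTP := isEdgeSet_union hT hP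
    obtain ⟨u1, u2⟩ := hU T.1 ((φ T).pull S) hT hP (fun h hh => hh.1)
    refine ⟨⟨isEdgeSet_compl hTP, hP, ?_, ?_, ?_, ?_⟩, ?_⟩
    · exact Set.disjoint_left.2 fun x hx h => hx.2 (Or.inr h)
    · simp only [compl_compl' hTP]
      exact ((φ T).comp_iff hT hS _).1 s1
    · simp only [u1]
      rw [← (φ T).pull_compl hT]
      exact ((φ T).comp_iff hT (isEdgeSet_compl hS) _).1 s2
    · simp only [u2]
      exact T.2.2.2
    · simp only [u2, compl_compl' hT]
      exact T.2.2.1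
  · rintro ⟨⟨S, hS, s1, s2⟩, T⟩ ⟨⟨S', hS', s1', s2'⟩, T'⟩ h
    simp only [Subtype.mk.injEq, Prod.mk.injEq] at h
    obtain ⟨h1, h2⟩ := h
    obtain ⟨u1, u2⟩ := hU T.1 ((φ T).pull S) T.2.1 ((φ T).pull_isEdgeSet T.2.1 hS)
      (fun h hh => hh.1)
    obtain ⟨u1', u2'⟩ := hU T'.1 ((φ T').pull S') T'.2.1 ((φ T').pull_isEdgeSet T'.2.1 hS')
      (fun h hh => hh.1)
    have hTT : T = T' := by
      apply Subtype.ext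
      rw [← compl_compl' T.2.1, ← compl_compl' T'.2.1, ← u2, ← u2', h1, h2]
    subst hTT
    have := (φ T).pull_injective h2
    subst this
    rfl
  · rintro ⟨⟨A, B⟩, ⟨h1, h2, h3, h4, h5, h6⟩, h7⟩
    have hAB := isEdgeSet_union h1 h2
    simp only at h1 h2 h3 h4 h5 h6 h7
    let T : {S : Set Γ'.H // Γ'.toLegGraph.IsEdgeSet S ∧
      Nonempty (Γ'.CIso S Δ) ∧ Nonempty (Γ'.CIso (Γ'.toLegGraph.edgeHalves \ S) Γ₃)} :=
      ⟨Γ'.edgeHalves \ (A ∪ B), isEdgeSet_compl hAB, h7, by rw [compl_compl' hAB]; exact h6⟩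
    have hT := T.2.1
    obtain ⟨S, hS, hSB⟩ := (φ T).pull_surj hT h2
      (Set.disjoint_left.2 fun x hx h => hx.2 (Or.inr h))
    have e1 : T.1 ∪ B = Γ'.edgeHalves \ A := by
      ext x
      have a1 := @h2.1 x
      have a2 : x ∈ _ → x ∉ _ := fun hx => Set.disjoint_left.1 h3 hx
      simp only [T, Set.mem_union, Set.mem_sdiff]
      tauto
    have e2 : T.1 ∪ (Γ'.edgeHalves \ (T.1 ∪ B)) = Γ'.edgeHalves \ B := by
      rw [e1, compl_compl' h1]
      ext x
      have a1 := @h1.1 x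
      have a2 : x ∈ _ → x ∉ _ := fun hx => Set.disjoint_left.1 h3 hx
      simp only [T, Set.mem_union, Set.mem_sdiff]
      tauto
    refine ⟨(⟨S, hS, ?_, ?_⟩, T), ?_⟩
    · rw [(φ T).comp_iff hT hS, hSB, e1]; exact h4
    · rw [(φ T).comp_iff hT (isEdgeSet_compl hS), (φ T).pull_compl hT, hSB, e2]; exact h5
    · apply Subtype.ext
      simp only [hSB, e1, compl_compl' h1]

theorem assoc_aux {ι : Type} (reps : ι → GenusGraph g n)
    (hreps : ∀ Δ : GenusGraph g n, ∃! i : ι, Nonempty (Δ.Iso (reps i)))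
    (Γ₁ Γ₂ Γ₃ Γ' : GenusGraph g n) :
    {i : ι | c' Γ₁ Γ₂ (reps i) * c' (reps i) Γ₃ Γ' ≠ 0}.Finite ∧
    (∑ᶠ i : ι, c' Γ₁ Γ₂ (reps i) * c' (reps i) Γ₃ Γ') = (Trip Γ₁ Γ₂ Γ₃ Γ').ncard := by
  classical
  have hfin : (Trip Γ₁ Γ₂ Γ₃ Γ').Finite := Set.toFinite _
  have hF : ∀ p ∈ Trip Γ₁ Γ₂ Γ₃ Γ', ∃! i : ι,
      Nonempty (Γ'.CIso (Γ'.edgeHalves \ (p.1 ∪ p.2)) (reps i)) := by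
    rintro p ⟨h1, h2, -⟩
    have hT := isEdgeSet_compl (isEdgeSet_union h1 h2)
    obtain ⟨i, ⟨e⟩, hu⟩ := hreps (Γ'.contract _ hT)
    obtain ⟨φ⟩ := Γ'.contract_ciso _ hT
    refine ⟨i, φ.trans_iso e, ?_⟩
    rintro j ⟨ψ⟩
    exact hu j (φ.iso hT ψ)
  by_cases hne : (Trip Γ₁ Γ₂ Γ₃ Γ').Nonempty
  swap
  · rw [Set.not_nonempty_iff_eq_empty] at hne
    simp [core, hne]
  obtain ⟨p0, hp0⟩ := hne
  obtain ⟨i0, -⟩ := hF p0 hp0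
  let f : Set Γ'.H × Set Γ'.H → ι := fun p =>
    if hp : p ∈ Trip Γ₁ Γ₂ Γ₃ Γ' then (hF p hp).choose else i0
  have hf : ∀ p ∈ Trip Γ₁ Γ₂ Γ₃ Γ', ∀ i,
      Nonempty (Γ'.CIso (Γ'.edgeHalves \ (p.1 ∪ p.2)) (reps i)) ↔ f p = i := by
    intro p hp i
    have h := (hF p hp).choose_spec
    simp only [f, hp, dif_pos]
    constructor
    · intro hi; exact (h.2 i hi).symm
    · rintro rfl; exact h.1
  have hcore : ∀ i, c' Γ₁ Γ₂ (reps i) * c' (reps i) Γ₃ Γ' =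
      (hfin.toFinset.filter (fun p => f p = i)).card := by
    intro i
    rw [core, ← Set.ncard_coe_finset]
    congr 1
    ext p
    simp only [Set.mem_ofPred_eq, Finset.coe_filter, Set.Finite.mem_toFinset]
    exact and_congr_right fun hp => hf p hp i
  have hsupp : ∀ i, c' Γ₁ Γ₂ (reps i) * c' (reps i) Γ₃ Γ' ≠ 0 →
      i ∈ hfin.toFinset.image f := by
    intro i hi
    rw [hcore, Finset.card_ne_zero] at hi
    obtain ⟨p, hp⟩ := hi
    rw [Finset.mem_filter] at hp
    exact Finset.mem_image.2 ⟨p, hp⟩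
  refine ⟨(hfin.toFinset.image f).finite_toSet.subset hsupp, ?_⟩
  rw [finsum_eq_sum_of_support_subset _ (s := hfin.toFinset.image f) hsupp]
  rw [Set.ncard_eq_toFinset_card _ hfin,
    Finset.card_eq_sum_card_image f]
  exact Finset.sum_congr rfl fun i _ => hcore i

end GenusGraph

/-- The multiplication on the formal graph algebra is associative: for all
graphs `Γ₁, Γ₂, Γ₃, Γ'` of genus `g` with `n` legs and any family `reps` containing exactly
one representative of each isomorphism class of graphs of genus `g` with `n` legs,
`Σ_Γ c'_{Γ₁,Γ₂,Γ} · c'_{Γ,Γ₃,Γ'} = Σ_Δ c'_{Γ₂,Γ₃,Δ} · c'_{Γ₁,Δ,Γ'}` (both sums having only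
finitely many nonzero terms), and both sides equal the number of ordered partitions
`E(Γ') = E₁ ⊔ E₂ ⊔ E₃` such that `Γ'/(E₂ ∪ E₃) ≅ Γ₁`, `Γ'/(E₁ ∪ E₃) ≅ Γ₂` and
`Γ'/(E₁ ∪ E₂) ≅ Γ₃` (the partition being recorded by the disjoint half-edge sets of `E₁`
and `E₂`, with `E₃` the complementary set of edges). -/
theorem formal_graph_algebra_assoc (g n : ℕ) {ι : Type} (reps : ι → GenusGraph g n)
    (hreps : ∀ Δ : GenusGraph g n, ∃! i : ι, Nonempty (Δ.Iso (reps i)))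
    (Γ₁ Γ₂ Γ₃ Γ' : GenusGraph g n) :
    {i : ι | GenusGraph.c' Γ₁ Γ₂ (reps i) * GenusGraph.c' (reps i) Γ₃ Γ' ≠ 0}.Finite ∧
    {i : ι | GenusGraph.c' Γ₂ Γ₃ (reps i) * GenusGraph.c' Γ₁ (reps i) Γ' ≠ 0}.Finite ∧
    (∑ᶠ i : ι, GenusGraph.c' Γ₁ Γ₂ (reps i) * GenusGraph.c' (reps i) Γ₃ Γ') =
      (∑ᶠ i : ι, GenusGraph.c' Γ₂ Γ₃ (reps i) * GenusGraph.c' Γ₁ (reps i) Γ') ∧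
    (∑ᶠ i : ι, GenusGraph.c' Γ₁ Γ₂ (reps i) * GenusGraph.c' (reps i) Γ₃ Γ') =
      Nat.card {p : Set Γ'.H × Set Γ'.H //
        Γ'.toLegGraph.IsEdgeSet p.1 ∧ Γ'.toLegGraph.IsEdgeSet p.2 ∧ Disjoint p.1 p.2 ∧
        Nonempty (Γ'.CIso (Γ'.toLegGraph.edgeHalves \ p.1) Γ₁) ∧
        Nonempty (Γ'.CIso (Γ'.toLegGraph.edgeHalves \ p.2) Γ₂) ∧
        Nonempty (Γ'.CIso (p.1 ∪ p.2) Γ₃)} := by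
  have h1 := GenusGraph.assoc_aux reps hreps Γ₁ Γ₂ Γ₃ Γ'
  have h2 := GenusGraph.assoc_aux reps hreps Γ₂ Γ₃ Γ₁ Γ'
  have h3 : ∀ i, GenusGraph.c' Γ₁ (reps i) Γ' = GenusGraph.c' (reps i) Γ₁ Γ' :=
    fun i => GenusGraph.c'_comm _ _ _
  simp only [h3]
  refine ⟨h1.1, h2.1, ?_, h1.2⟩
  rw [h1.2, h2.2, GenusGraph.trip_rot]
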